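/- For every integer n ≥ 6, the convex polytope graph Δ_n has independent metric number 3; i.e., there exists a resolving set of Δ_n of cardinality 3 whose three vertices are pairwise non-adjacent in Δ_n, and Δ_n has no resolving set of cardinality 2. -/

import Mathlib

/-- Vertices of the heptagonal circular ladder: four families indexed by `ZMod n`. -/
inductive HCLVertex (n : ℕ) : Type
  | p (t : ZMod n) : HCLVertex n
  | q (t : ZMod n) : HCLVertex n
  | r (t : ZMod n) : HCLVertex n
  | s (t : ZMod n) : HCLVertex n
deriving DecidableEq

/-- Base relation giving the edges of the heptagonal circular ladder `Γ_n`: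
`p_t p_{t+1}`, `p_t q_t`, `q_t r_t`, `r_t s_t`, `s_t r_{t+1}` (indices mod `n`). -/
def gammaRel (n : ℕ) : HCLVertex n → HCLVertex n → Prop
  | .p t, .p u => u = t + 1
  | .p t, .q u => u = t
  | .q t, .r u => u = t
  | .r t, .s u => u = t
  | .s t, .r u => u = t + 1
  | _, _ => False

/-- The heptagonal circular ladder `Γ_n`. -/
def Gamma (n : ℕ) : SimpleGraph (HCLVertex n) :=
  SimpleGraph.fromRel (gammaRel n)

/-- The extra edges `r_t q_{t+1}` added to `Γ_n` to obtain `Δ_n`. -/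
def deltaRel (n : ℕ) : HCLVertex n → HCLVertex n → Prop
  | .r t, .q u => u = t + 1
  | _, _ => False

/-- The convex polytope graph `Δ_n`, obtained from `Γ_n` by adding the edges `r_t q_{t+1}`. -/
def Delta (n : ℕ) : SimpleGraph (HCLVertex n) :=
  SimpleGraph.fromRel (fun v w => gammaRel n v w ∨ deltaRel n v w)

/-- `W` is a resolving set of `G`: every pair of distinct vertices is distinguished by
its distance to some vertex of `W`. -/
def IsResolving {V : Type*} (G : SimpleGraph V) (W : Set V) : Prop :=
  ∀ u v : V, u ≠ v → ∃ w ∈ W, G.dist w u ≠ G.dist w v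

/-- Distance from a vertex `x` to an edge `e = yz`: `min (d x y) (d x z)`. -/
noncomputable def edgeDist {V : Type*} (G : SimpleGraph V) (x : V) (e : Sym2 V) : ℕ :=
  Sym2.lift ⟨fun y z => min (G.dist x y) (G.dist x z), fun y z => min_comm _ _⟩ e

/-- `W` is an edge resolving set of `G`: every pair of distinct edges is distinguished by
its distance to some vertex of `W`. -/
def IsEdgeResolving {V : Type*} (G : SimpleGraph V) (W : Set V) : Prop :=
  ∀ e ∈ G.edgeSet, ∀ f ∈ G.edgeSet, e ≠ f → ∃ w ∈ W, edgeDist G w e ≠ edgeDist G w f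

/-- The four layers of the vertex set. -/
inductive Layer : Type
  | p | q | r | s

/-- The vertex of a given layer and index. -/
def Layer.vertex {n : ℕ} : Layer → ZMod n → HCLVertex n
  | .p, t => .p t
  | .q, t => .q t
  | .r, t => .r t
  | .s, t => .s t

/-- The layer of a vertex. -/
def HCLVertex.layer {n : ℕ} : HCLVertex n → Layer
  | .p _ => .p
  | .q _ => .q
  | .r _ => .r
  | .s _ => .s

/-- The index of a vertex. -/
def HCLVertex.index {n : ℕ} : HCLVertex n → ZMod n
  | .p t => t
  | .q t => t
  | .r t => t
  | .s t => t

/-- The distance in `Δ_n` from the vertex of index `0` in one layer to the vertex of index `i`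
in another, for `i < n`. -/
def layerDist (n i : ℕ) : Layer → Layer → ℕ
  | .p, .p => min i (n - i)
  | .p, .q => min i (n - i) + 1
  | .p, .r => min i (n - 1 - i) + 2
  | .p, .s => min i (n - 2 - i) + 3
  | .q, .p => min i (n - i) + 1
  | .q, .q => min (2 * min i (n - i)) (min i (n - i) + 2)
  | .q, .r => min (2 * min i (n - 1 - i) + 1) (min i (n - 1 - i) + 3)
  | .q, .s => min (2 * min i (n - 2 - i) + 2) (min i (n - 2 - i) + 4)
  | .r, .p => min (i - 1) (n - i) + 2
  | .r, .q => min (2 * min (i - 1) (n - i) + 1) (min (i - 1) (n - i) + 3)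
  | .r, .r => min (2 * min i (n - i)) (min i (n - i) + 3)
  | .r, .s => min (2 * min i (n - 1 - i) + 1) (min i (n - 1 - i) + 4)
  | .s, .p => min (i - 2) (n - i) + 3
  | .s, .q => min (2 * min (i - 2) (n - i) + 2) (min (i - 2) (n - i) + 4)
  | .s, .r => min (2 * min (i - 1) (n - i) + 1) (min (i - 1) (n - i) + 4)
  | .s, .s => min (2 * min i (n - i)) (min i (n - i) + 4)

/-- A function vanishing only at `w`, changing by at most one along edges, and decreasing by one
along some edge out of each vertex other than `w`, is the distance from `w`. -/
theorem SimpleGraph.dist_eq_of_lipschitz_of_descent {V : Type*} (G : SimpleGraph V) (w : V)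
    (f : V → ℕ) (hw : f w = 0) (hlip : ∀ u v, G.Adj u v → f v ≤ f u + 1)
    (hdesc : ∀ v, v ≠ w → ∃ u, G.Adj u v ∧ f u + 1 = f v) (v : V) : G.dist w v = f v := by
  have hwalk : ∀ m v, f v = m → ∃ c : G.Walk w v, c.length = m := by
    intro m
    induction m with
    | zero =>
      intro v hv
      by_cases h : v = w
      · subst h
        exact ⟨.nil, rfl⟩
      · obtain ⟨u, -, hu⟩ := hdesc v h
        omega
    | succ m ih =>
      intro v hv
      have h : v ≠ w := by
        rintro rfl
        omega
      obtain ⟨u, huv, hu⟩ := hdesc v h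
      obtain ⟨c, hc⟩ := ih u (by omega)
      exact ⟨c.concat huv, by simp [hc]⟩
  have hbound : ∀ {x y : V} (c : G.Walk x y), f y ≤ f x + c.length := by
    intro x y c
    induction c with
    | nil => simp
    | cons h c ih =>
      have := hlip _ _ h
      simp only [SimpleGraph.Walk.length_cons]
      omega
  obtain ⟨c, hc⟩ := hwalk (f v) v rfl
  apply le_antisymm
  · exact hc ▸ G.dist_le c
  · obtain ⟨d, hd⟩ := SimpleGraph.Reachable.exists_walk_length_eq_dist ⟨c⟩
    have := hbound d
    omega

theorem ZMod.val_add_one_sub {n : ℕ} (hn : 2 ≤ n) (a t : ZMod n) :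
    ((t - a).val + 1 < n ∧ (t + 1 - a).val = (t - a).val + 1) ∨
      ((t - a).val + 1 = n ∧ (t + 1 - a).val = 0) := by
  have : NeZero n := ⟨by omega⟩
  have : Fact (1 < n) := ⟨by omega⟩
  have hlt := ZMod.val_lt (t - a)
  have heq : (t + 1 - a).val = ((t - a).val + 1) % n := by
    rw [show t + 1 - a = (t - a) + 1 by ring, ZMod.val_add, ZMod.val_one]
  rcases Nat.lt_or_ge ((t - a).val + 1) n with h | h
  · exact .inl ⟨h, by rw [heq, Nat.mod_eq_of_lt h]⟩
  · have h' : (t - a).val + 1 = n := by omega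
    exact .inr ⟨h', by rw [heq, h', Nat.mod_self]⟩

theorem delta_adj_iff {n : ℕ} (u v : HCLVertex n) :
    (Delta n).Adj u v ↔
      u ≠ v ∧ ((gammaRel n u v ∨ deltaRel n u v) ∨ (gammaRel n v u ∨ deltaRel n v u)) :=
  Iff.rfl

theorem layerDist_lipschitz {n : ℕ} (hn : 6 ≤ n) (x : Layer) (a : ZMod n) (u v : HCLVertex n)
    (h : gammaRel n u v ∨ deltaRel n u v) :
    layerDist n (v.index - a).val x v.layer ≤ layerDist n (u.index - a).val x u.layer + 1 ∧
      layerDist n (u.index - a).val x u.layer ≤ layerDist n (v.index - a).val x v.layer + 1 := by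
  have : NeZero n := ⟨by omega⟩
  have hlt := fun t : ZMod n => ZMod.val_lt (t - a)
  have hsucc := ZMod.val_add_one_sub (show 2 ≤ n by omega) a
  cases u <;> cases v <;> rename_i t t' <;>
    simp only [gammaRel, deltaRel, or_false, false_or] at h <;>
    try exact h.elim
  all_goals
    have h0 := hlt t
    have h1 := hsucc t
    simp only [HCLVertex.index, HCLVertex.layer]
    rw [h]
  all_goals cases x <;> simp only [layerDist] <;> omega

set_option maxHeartbeats 4000000 in
theorem layerDist_descent_p {n i j k : ℕ} (hn : 6 ≤ n) (hi : i < n)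
    (hj : j + 1 < n ∧ i = j + 1 ∨ j + 1 = n ∧ i = 0)
    (hk : i + 1 < n ∧ k = i + 1 ∨ i + 1 = n ∧ k = 0)
    (x : Layer) (hx : x = .p → i ≠ 0) :
    layerDist n j x .p + 1 = layerDist n i x .p ∨
      layerDist n k x .p + 1 = layerDist n i x .p ∨
      layerDist n i x .q + 1 = layerDist n i x .p := by
  cases x with
  | p =>
    have hne := hx rfl
    simp only [layerDist]
    by_cases h1 : 2 * i < n + 1
    · left; omega
    right; left; omega
  | q =>
    simp only [layerDist]
    by_cases h1 : n ≤ 2 * i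
    · right; left; omega
    by_cases h2 : 1 ≤ i
    · left; omega
    right; right; omega
  | r =>
    simp only [layerDist]
    by_cases h1 : n + 1 ≤ 2 * i
    · right; left; omega
    by_cases h2 : 2 ≤ i
    · left; omega
    right; right; omega
  | s =>
    simp only [layerDist]
    by_cases h1 : n + 2 ≤ 2 * i
    · right; left; omega
    by_cases h2 : 3 ≤ i
    · left; omega
    right; right; omega

set_option maxHeartbeats 4000000 in
theorem layerDist_descent_q {n i j : ℕ} (hn : 6 ≤ n) (hi : i < n)
    (hj : j + 1 < n ∧ i = j + 1 ∨ j + 1 = n ∧ i = 0)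
    (x : Layer) (hx : x = .q → i ≠ 0) :
    layerDist n i x .p + 1 = layerDist n i x .q ∨
      layerDist n i x .r + 1 = layerDist n i x .q ∨
      layerDist n j x .r + 1 = layerDist n i x .q := by
  cases x with
  | p =>
    exact .inl rfl
  | q =>
    have hne := hx rfl
    simp only [layerDist]
    by_cases h1 : 2 ≤ i ∧ i + 1 < n
    · left; omega
    by_cases h2 : i < 2
    · right; right; omega
    right; left; omega
  | r =>
    simp only [layerDist]
    by_cases h1 : 3 ≤ i ∧ i + 1 < n
    · left; omega
    by_cases h2 : 1 ≤ i ∧ i < 3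
    · right; right; omega
    right; left; omega
  | s =>
    simp only [layerDist]
    by_cases h1 : 4 ≤ i ∧ i + 1 < n
    · left; omega
    by_cases h2 : 1 ≤ i ∧ i < 4
    · right; right; omega
    right; left; omega

set_option maxHeartbeats 4000000 in
theorem layerDist_descent_r {n i j k : ℕ} (hn : 6 ≤ n) (hi : i < n)
    (hj : j + 1 < n ∧ i = j + 1 ∨ j + 1 = n ∧ i = 0)
    (hk : i + 1 < n ∧ k = i + 1 ∨ i + 1 = n ∧ k = 0)
    (x : Layer) (hx : x = .r → i ≠ 0) :
    layerDist n i x .q + 1 = layerDist n i x .r ∨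
      layerDist n k x .q + 1 = layerDist n i x .r ∨
      layerDist n i x .s + 1 = layerDist n i x .r ∨
      layerDist n j x .s + 1 = layerDist n i x .r := by
  cases x with
  | p =>
    simp only [layerDist]
    by_cases h1 : 2 * i < n
    · left; omega
    right; left; omega
  | q =>
    simp only [layerDist]
    by_cases h1 : 2 * i < n
    · left; omega
    right; left; omega
  | r =>
    have hne := hx rfl
    simp only [layerDist]
    by_cases h1 : 2 * i < n + 1
    · left; omega
    right; left; omega
  | s =>
    simp only [layerDist]
    by_cases h1 : n + 1 ≤ 2 * i
    · right; left; omega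
    by_cases h2 : 2 ≤ i
    · left; omega
    by_cases h3 : i < 1
    · right; right; left; omega
    right; right; right; omega

set_option maxHeartbeats 4000000 in
theorem layerDist_descent_s {n i k : ℕ} (hn : 6 ≤ n) (hi : i < n)
    (hk : i + 1 < n ∧ k = i + 1 ∨ i + 1 = n ∧ k = 0)
    (x : Layer) (hx : x = .s → i ≠ 0) :
    layerDist n i x .r + 1 = layerDist n i x .s ∨
      layerDist n k x .r + 1 = layerDist n i x .s := by
  cases x with
  | p =>
    simp only [layerDist]
    by_cases h1 : n ≤ 2 * i + 2
    · right; omega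
    left; omega
  | q =>
    simp only [layerDist]
    by_cases h1 : n ≤ 2 * i + 2
    · right; omega
    left; omega
  | r =>
    simp only [layerDist]
    by_cases h1 : 2 * i < n
    · left; omega
    right; omega
  | s =>
    have hne := hx rfl
    simp only [layerDist]
    by_cases h1 : 2 * i < n + 1
    · left; omega
    right; omega

theorem layerDist_descent {n : ℕ} (hn : 6 ≤ n) (x : Layer) (a : ZMod n) (v : HCLVertex n)
    (hv : v ≠ x.vertex a) :
    ∃ u, (Delta n).Adj u v ∧
      layerDist n (u.index - a).val x u.layer + 1 = layerDist n (v.index - a).val x v.layer := by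
  have : NeZero n := ⟨by omega⟩
  have : Fact (1 < n) := ⟨by omega⟩
  have hlt := fun t : ZMod n => ZMod.val_lt (t - a)
  have hsucc := ZMod.val_add_one_sub (show 2 ≤ n by omega) a
  have hpred : ∀ t : ZMod n, ((t - 1 - a).val + 1 < n ∧ (t - a).val = (t - 1 - a).val + 1) ∨
      ((t - 1 - a).val + 1 = n ∧ (t - a).val = 0) := fun t => by
    simpa only [sub_add_cancel] using hsucc (t - 1)
  have hzero : ∀ t : ZMod n, (t - a).val = 0 → t = a := fun t h =>
    sub_eq_zero.1 ((ZMod.val_eq_zero _).1 h)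
  cases v with
  | p t =>
    have hx : x = .p → (t - a).val ≠ 0 := by
      rintro rfl h
      exact hv (by rw [hzero t h]; rfl)
    rcases layerDist_descent_p hn (hlt t) (hpred t) (hsucc t) x hx with h | h | h
    · exact ⟨.p (t - 1), by simp [delta_adj_iff, gammaRel, deltaRel], h⟩
    · exact ⟨.p (t + 1), by simp [delta_adj_iff, gammaRel, deltaRel], h⟩
    · exact ⟨.q t, by simp [delta_adj_iff, gammaRel, deltaRel], h⟩
  | q t =>
    have hx : x = .q → (t - a).val ≠ 0 := by
      rintro rfl h
      exact hv (by rw [hzero t h]; rfl)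
    rcases layerDist_descent_q hn (hlt t) (hpred t) x hx with h | h | h
    · exact ⟨.p t, by simp [delta_adj_iff, gammaRel, deltaRel], h⟩
    · exact ⟨.r t, by simp [delta_adj_iff, gammaRel, deltaRel], h⟩
    · exact ⟨.r (t - 1), by simp [delta_adj_iff, gammaRel, deltaRel], h⟩
  | r t =>
    have hx : x = .r → (t - a).val ≠ 0 := by
      rintro rfl h
      exact hv (by rw [hzero t h]; rfl)
    rcases layerDist_descent_r hn (hlt t) (hpred t) (hsucc t) x hx with h | h | h | h
    · exact ⟨.q t, by simp [delta_adj_iff, gammaRel, deltaRel], h⟩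
    · exact ⟨.q (t + 1), by simp [delta_adj_iff, gammaRel, deltaRel], h⟩
    · exact ⟨.s t, by simp [delta_adj_iff, gammaRel, deltaRel], h⟩
    · exact ⟨.s (t - 1), by simp [delta_adj_iff, gammaRel, deltaRel], h⟩
  | s t =>
    have hx : x = .s → (t - a).val ≠ 0 := by
      rintro rfl h
      exact hv (by rw [hzero t h]; rfl)
    rcases layerDist_descent_s hn (hlt t) (hsucc t) x hx with h | h
    · exact ⟨.r t, by simp [delta_adj_iff, gammaRel, deltaRel], h⟩
    · exact ⟨.r (t + 1), by simp [delta_adj_iff, gammaRel, deltaRel], h⟩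

theorem delta_dist {n : ℕ} (hn : 6 ≤ n) (x y : Layer) (a b : ZMod n) :
    (Delta n).dist (x.vertex a) (y.vertex b) = layerDist n (b - a).val x y := by
  rw [SimpleGraph.dist_eq_of_lipschitz_of_descent (Delta n) (x.vertex a)
    (fun v => layerDist n (v.index - a).val x v.layer) _ _ (layerDist_descent hn x a)]
  · cases y <;> rfl
  · cases x <;> simp [Layer.vertex, HCLVertex.index, HCLVertex.layer, layerDist]
  · intro u v huv
    rcases huv.2 with h | h
    · exact (layerDist_lipschitz hn x a u v h).1
    · exact (layerDist_lipschitz hn x a v u h).2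

/-- The representative in `[0, n)` of an integer in `[-2n, 2n)`. -/
def cyclicRep (n : ℕ) (i : ℤ) : ℕ :=
  if i < -n then (i + 2 * n).toNat
  else if i < 0 then (i + n).toNat
  else if i < n then i.toNat
  else (i - n).toNat

theorem ZMod.val_intCast_eq_cyclicRep {n : ℕ} (hn : 0 < n) {i : ℤ} (h : -(2 * n) ≤ i)
    (h' : i < 2 * n) : ((i : ZMod n)).val = cyclicRep n i := by
  have : NeZero n := ⟨by omega⟩
  have hrep : ((cyclicRep n i : ℕ) : ZMod n) = (i : ZMod n) := by
    have hcase : (cyclicRep n i : ℤ) = i + 2 * n ∨ (cyclicRep n i : ℤ) = i + n ∨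
        (cyclicRep n i : ℤ) = i ∨ (cyclicRep n i : ℤ) = i - n := by
      unfold cyclicRep
      split_ifs <;> omega
    rw [← Int.cast_natCast]
    rcases hcase with h | h | h | h <;> rw [h] <;> simp
  have hlt : cyclicRep n i < n := by
    unfold cyclicRep
    split_ifs <;> omega
  rw [← hrep, ZMod.val_natCast, Nat.mod_eq_of_lt hlt]

/-- Two distinct vertices, in layers `l`, `l'` and at indices `a + c`, `a + c'`, that have the same
distance to the vertex of index `a` in layer `x` and the same distance to the vertex of index
`a + k` in layer `y`. -/
def HasTwins (n k : ℕ) (x y : Layer) : Prop :=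
  ∃ (l l' : Layer) (c c' : ℤ), (-n ≤ c ∧ c < 2 * n ∧ -n ≤ c' ∧ c' < 2 * n) ∧
    (l = l' → cyclicRep n c ≠ cyclicRep n c') ∧
    layerDist n (cyclicRep n c) x l = layerDist n (cyclicRep n c') x l' ∧
    layerDist n (cyclicRep n (c - k)) y l = layerDist n (cyclicRep n (c' - k)) y l'

theorem hasTwins_p_p {n k : ℕ} (hn : 6 ≤ n) (hk : k < n) : HasTwins n k .p .p := by
  by_cases h1 : 2 * k + 1 < n
  · refine ⟨.p, .q, -1, 0, by omega, ?_, ?_, ?_⟩ <;>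
      simp only [layerDist, cyclicRep, reduceCtorEq, false_implies] <;>
      split_ifs <;> omega
  by_cases h2 : n + 2 ≤ 2 * k
  · refine ⟨.p, .q, 1, 0, by omega, ?_, ?_, ?_⟩ <;>
      simp only [layerDist, cyclicRep, reduceCtorEq, false_implies] <;>
      split_ifs <;> omega
  by_cases h3 : 2 * k < n
  · refine ⟨.q, .r, -3, 2, by omega, ?_, ?_, ?_⟩ <;>
      simp only [layerDist, cyclicRep, reduceCtorEq, false_implies] <;>
      split_ifs <;> omega
  by_cases h4 : 2 * k < n + 1
  · refine ⟨.p, .p, -2, 2, by omega, ?_, ?_, ?_⟩ <;>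
      simp only [layerDist, cyclicRep, forall_const] <;>
      split_ifs <;> omega
  refine ⟨.q, .r, 1, -1, by omega, ?_, ?_, ?_⟩ <;>
    simp only [layerDist, cyclicRep, reduceCtorEq, false_implies] <;>
    split_ifs <;> omega

theorem hasTwins_p_q {n k : ℕ} (hn : 6 ≤ n) (hk : k < n) : HasTwins n k .p .q := by
  by_cases h1 : n + 2 ≤ 2 * k
  · refine ⟨.q, .s, k - 1, k - 1, by omega, ?_, ?_, ?_⟩ <;>
      simp only [layerDist, cyclicRep, reduceCtorEq, false_implies] <;>
      split_ifs <;> omega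
  by_cases h2 : 1 ≤ k ∧ 2 * k + 1 < n
  · refine ⟨.q, .s, k + 1, k - 1, by omega, ?_, ?_, ?_⟩ <;>
      simp only [layerDist, cyclicRep, reduceCtorEq, false_implies] <;>
      split_ifs <;> omega
  by_cases h3 : 2 * k < n
  · refine ⟨.s, .s, -2, -1, by omega, ?_, ?_, ?_⟩ <;>
      simp only [layerDist, cyclicRep, forall_const] <;>
      split_ifs <;> omega
  by_cases h4 : 2 * k < n + 1
  · refine ⟨.p, .p, -2, 2, by omega, ?_, ?_, ?_⟩ <;>
      simp only [layerDist, cyclicRep, forall_const] <;>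
      split_ifs <;> omega
  refine ⟨.q, .r, 1, -1, by omega, ?_, ?_, ?_⟩ <;>
    simp only [layerDist, cyclicRep, reduceCtorEq, false_implies] <;>
    split_ifs <;> omega

theorem hasTwins_p_r {n k : ℕ} (hn : 6 ≤ n) (hk : k < n) : HasTwins n k .p .r := by
  by_cases h1 : 1 ≤ k ∧ 2 * k + 1 < n
  · refine ⟨.p, .r, k + 1, k - 1, by omega, ?_, ?_, ?_⟩ <;>
      simp only [layerDist, cyclicRep, reduceCtorEq, false_implies] <;>
      split_ifs <;> omega
  by_cases h2 : n ≤ 2 * k ∧ k + 1 < n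
  · refine ⟨.p, .r, k, k + 1, by omega, ?_, ?_, ?_⟩ <;>
      simp only [layerDist, cyclicRep, reduceCtorEq, false_implies] <;>
      split_ifs <;> omega
  refine ⟨.s, .s, k - 1, k, by omega, ?_, ?_, ?_⟩ <;>
    simp only [layerDist, cyclicRep, forall_const] <;>
    split_ifs <;> omega

theorem hasTwins_p_s {n k : ℕ} (hn : 6 ≤ n) (hk : k < n) : HasTwins n k .p .s := by
  by_cases h1 : 1 ≤ k ∧ 2 * k + 1 < n
  · refine ⟨.p, .r, k + 1, k - 1, by omega, ?_, ?_, ?_⟩ <;>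
      simp only [layerDist, cyclicRep, reduceCtorEq, false_implies] <;>
      split_ifs <;> omega
  by_cases h2 : 1 ≤ k ∧ k + 2 < n
  · refine ⟨.p, .r, k + 1, k + 2, by omega, ?_, ?_, ?_⟩ <;>
      simp only [layerDist, cyclicRep, reduceCtorEq, false_implies] <;>
      split_ifs <;> omega
  by_cases h3 : n + 6 ≤ 2 * k
  · refine ⟨.p, .q, k - 3, k - 2, by omega, ?_, ?_, ?_⟩ <;>
      simp only [layerDist, cyclicRep, reduceCtorEq, false_implies] <;>
      split_ifs <;> omega
  by_cases h4 : k < 1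
  · refine ⟨.p, .r, 2, -1, by omega, ?_, ?_, ?_⟩ <;>
      simp only [layerDist, cyclicRep, reduceCtorEq, false_implies] <;>
      split_ifs <;> omega
  by_cases h5 : k + 1 < n
  · refine ⟨.p, .s, -3, 0, by omega, ?_, ?_, ?_⟩ <;>
      simp only [layerDist, cyclicRep, reduceCtorEq, false_implies] <;>
      split_ifs <;> omega
  refine ⟨.p, .p, -2, 2, by omega, ?_, ?_, ?_⟩ <;>
    simp only [layerDist, cyclicRep, forall_const] <;>
    split_ifs <;> omega

theorem hasTwins_q_q {n k : ℕ} (hn : 6 ≤ n) (hk : k < n) : HasTwins n k .q .q := by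
  by_cases h1 : 2 * k + 5 < n
  · refine ⟨.p, .q, -3, -2, by omega, ?_, ?_, ?_⟩ <;>
      simp only [layerDist, cyclicRep, reduceCtorEq, false_implies] <;>
      split_ifs <;> omega
  by_cases h2 : n + 6 ≤ 2 * k
  · refine ⟨.p, .q, 3, 2, by omega, ?_, ?_, ?_⟩ <;>
      simp only [layerDist, cyclicRep, reduceCtorEq, false_implies] <;>
      split_ifs <;> omega
  by_cases h3 : 3 ≤ k ∧ 2 * k + 1 < n
  · refine ⟨.q, .s, -1, -1, by omega, ?_, ?_, ?_⟩ <;>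
      simp only [layerDist, cyclicRep, reduceCtorEq, false_implies] <;>
      split_ifs <;> omega
  by_cases h4 : n + 2 ≤ 2 * k ∧ k + 2 < n
  · refine ⟨.q, .s, 1, -1, by omega, ?_, ?_, ?_⟩ <;>
      simp only [layerDist, cyclicRep, reduceCtorEq, false_implies] <;>
      split_ifs <;> omega
  by_cases h5 : 3 ≤ k ∧ 2 * k < n
  · refine ⟨.p, .q, -1, 1, by omega, ?_, ?_, ?_⟩ <;>
      simp only [layerDist, cyclicRep, reduceCtorEq, false_implies] <;>
      split_ifs <;> omega
  by_cases h6 : 3 ≤ k ∧ 2 * k < n + 1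
  · refine ⟨.p, .p, -2, 2, by omega, ?_, ?_, ?_⟩ <;>
      simp only [layerDist, cyclicRep, forall_const] <;>
      split_ifs <;> omega
  by_cases h7 : 3 ≤ k ∧ 2 * k < n + 2
  · refine ⟨.p, .q, 1, -1, by omega, ?_, ?_, ?_⟩ <;>
      simp only [layerDist, cyclicRep, reduceCtorEq, false_implies] <;>
      split_ifs <;> omega
  by_cases h8 : 2 ≤ k ∧ k < 3
  · refine ⟨.p, .s, -1, -1, by omega, ?_, ?_, ?_⟩ <;>
      simp only [layerDist, cyclicRep, reduceCtorEq, false_implies] <;>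
      split_ifs <;> omega
  by_cases h9 : k + 1 < n
  · refine ⟨.q, .s, -1, -2, by omega, ?_, ?_, ?_⟩ <;>
      simp only [layerDist, cyclicRep, reduceCtorEq, false_implies] <;>
      split_ifs <;> omega
  refine ⟨.q, .s, -2, -3, by omega, ?_, ?_, ?_⟩ <;>
    simp only [layerDist, cyclicRep, reduceCtorEq, false_implies] <;>
    split_ifs <;> omega

theorem hasTwins_q_r {n k : ℕ} (hn : 6 ≤ n) (hk : k < n) : HasTwins n k .q .r := by
  by_cases h1 : k < 5
  · refine ⟨.q, .s, 2, 1, by omega, ?_, ?_, ?_⟩ <;>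
      simp only [layerDist, cyclicRep, reduceCtorEq, false_implies] <;>
      split_ifs <;> omega
  by_cases h2 : n ≤ k + 5
  · refine ⟨.q, .s, -2, -3, by omega, ?_, ?_, ?_⟩ <;>
      simp only [layerDist, cyclicRep, reduceCtorEq, false_implies] <;>
      split_ifs <;> omega
  by_cases h3 : 2 * k + 1 < n
  · refine ⟨.p, .r, k + 1, k - 1, by omega, ?_, ?_, ?_⟩ <;>
      simp only [layerDist, cyclicRep, reduceCtorEq, false_implies] <;>
      split_ifs <;> omega
  by_cases h4 : n ≤ 2 * k
  · refine ⟨.p, .r, k, k + 1, by omega, ?_, ?_, ?_⟩ <;>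
      simp only [layerDist, cyclicRep, reduceCtorEq, false_implies] <;>
      split_ifs <;> omega
  refine ⟨.p, .p, -3, 3, by omega, ?_, ?_, ?_⟩ <;>
    simp only [layerDist, cyclicRep, forall_const] <;>
    split_ifs <;> omega

theorem hasTwins_q_s {n k : ℕ} (hn : 6 ≤ n) (hk : k < n) : HasTwins n k .q .s := by
  by_cases h1 : n + 6 ≤ 2 * k
  · refine ⟨.p, .q, k - 3, k - 2, by omega, ?_, ?_, ?_⟩ <;>
      simp only [layerDist, cyclicRep, reduceCtorEq, false_implies] <;>
      split_ifs <;> omega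
  by_cases h2 : 3 ≤ k ∧ 2 * k + 1 < n
  · refine ⟨.p, .r, k + 1, k - 1, by omega, ?_, ?_, ?_⟩ <;>
      simp only [layerDist, cyclicRep, reduceCtorEq, false_implies] <;>
      split_ifs <;> omega
  by_cases h3 : 3 ≤ k ∧ k + 4 < n
  · refine ⟨.p, .r, k + 1, k + 2, by omega, ?_, ?_, ?_⟩ <;>
      simp only [layerDist, cyclicRep, reduceCtorEq, false_implies] <;>
      split_ifs <;> omega
  by_cases h4 : 1 ≤ k ∧ k < 4
  · refine ⟨.q, .s, 1, 0, by omega, ?_, ?_, ?_⟩ <;>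
      simp only [layerDist, cyclicRep, reduceCtorEq, false_implies] <;>
      split_ifs <;> omega
  by_cases h5 : k + 2 < n
  · refine ⟨.q, .s, -1, -2, by omega, ?_, ?_, ?_⟩ <;>
      simp only [layerDist, cyclicRep, reduceCtorEq, false_implies] <;>
      split_ifs <;> omega
  refine ⟨.q, .s, -2, -3, by omega, ?_, ?_, ?_⟩ <;>
    simp only [layerDist, cyclicRep, reduceCtorEq, false_implies] <;>
    split_ifs <;> omega

theorem hasTwins_r_r {n k : ℕ} (hn : 6 ≤ n) (hk : k < n) : HasTwins n k .r .r := by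
  by_cases h1 : k < 6
  · refine ⟨.q, .s, 3, 2, by omega, ?_, ?_, ?_⟩ <;>
      simp only [layerDist, cyclicRep, reduceCtorEq, false_implies] <;>
      split_ifs <;> omega
  by_cases h2 : n ≤ k + 5
  · refine ⟨.q, .s, -2, -3, by omega, ?_, ?_, ?_⟩ <;>
      simp only [layerDist, cyclicRep, reduceCtorEq, false_implies] <;>
      split_ifs <;> omega
  by_cases h3 : 2 * k < n
  · refine ⟨.p, .r, 0, 1, by omega, ?_, ?_, ?_⟩ <;>
      simp only [layerDist, cyclicRep, reduceCtorEq, false_implies] <;>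
      split_ifs <;> omega
  by_cases h4 : n + 1 ≤ 2 * k
  · refine ⟨.p, .r, 1, -1, by omega, ?_, ?_, ?_⟩ <;>
      simp only [layerDist, cyclicRep, reduceCtorEq, false_implies] <;>
      split_ifs <;> omega
  refine ⟨.p, .p, -2, 3, by omega, ?_, ?_, ?_⟩ <;>
    simp only [layerDist, cyclicRep, forall_const] <;>
    split_ifs <;> omega

theorem hasTwins_r_s {n k : ℕ} (hn : 6 ≤ n) (hk : k < n) : HasTwins n k .r .s := by
  by_cases h1 : k < 6
  · refine ⟨.q, .s, k - 2, k - 3, by omega, ?_, ?_, ?_⟩ <;>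
      simp only [layerDist, cyclicRep, reduceCtorEq, false_implies] <;>
      split_ifs <;> omega
  by_cases h2 : n ≤ k + 5
  · refine ⟨.q, .s, k + 3, k + 2, by omega, ?_, ?_, ?_⟩ <;>
      simp only [layerDist, cyclicRep, reduceCtorEq, false_implies] <;>
      split_ifs <;> omega
  by_cases h3 : n ≤ 2 * k + 1
  · refine ⟨.p, .r, k + 1, k + 2, by omega, ?_, ?_, ?_⟩ <;>
      simp only [layerDist, cyclicRep, reduceCtorEq, false_implies] <;>
      split_ifs <;> omega
  refine ⟨.p, .r, 0, 1, by omega, ?_, ?_, ?_⟩ <;>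
    simp only [layerDist, cyclicRep, reduceCtorEq, false_implies] <;>
    split_ifs <;> omega

theorem hasTwins_s_s {n k : ℕ} (hn : 6 ≤ n) (hk : k < n) : HasTwins n k .s .s := by
  by_cases h1 : k < 3
  · refine ⟨.q, .s, 0, -1, by omega, ?_, ?_, ?_⟩ <;>
      simp only [layerDist, cyclicRep, reduceCtorEq, false_implies] <;>
      split_ifs <;> omega
  by_cases h2 : k < 6
  · refine ⟨.q, .s, 3, 2, by omega, ?_, ?_, ?_⟩ <;>
      simp only [layerDist, cyclicRep, reduceCtorEq, false_implies] <;>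
      split_ifs <;> omega
  by_cases h3 : n ≤ 2 * k ∧ k + 4 < n
  · refine ⟨.p, .r, 1, -1, by omega, ?_, ?_, ?_⟩ <;>
      simp only [layerDist, cyclicRep, reduceCtorEq, false_implies] <;>
      split_ifs <;> omega
  by_cases h4 : n ≤ 2 * k ∧ k + 1 < n
  · refine ⟨.q, .s, 0, -1, by omega, ?_, ?_, ?_⟩ <;>
      simp only [layerDist, cyclicRep, reduceCtorEq, false_implies] <;>
      split_ifs <;> omega
  by_cases h5 : 2 * k < n
  · refine ⟨.p, .r, 1, 2, by omega, ?_, ?_, ?_⟩ <;>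
      simp only [layerDist, cyclicRep, reduceCtorEq, false_implies] <;>
      split_ifs <;> omega
  refine ⟨.p, .p, 0, 1, by omega, ?_, ?_, ?_⟩ <;>
    simp only [layerDist, cyclicRep, forall_const] <;>
    split_ifs <;> omega

theorem Layer.vertex_injective {n : ℕ} {x y : Layer} {a b : ZMod n} (h : x.vertex a = y.vertex b) :
    x = y ∧ a = b := by
  cases x <;> cases y <;> simp_all [Layer.vertex]

theorem HCLVertex.exists_vertex_eq {n : ℕ} (v : HCLVertex n) :
    ∃ (x : Layer) (a : ZMod n), v = x.vertex a := by
  cases v with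
  | p t => exact ⟨.p, t, rfl⟩
  | q t => exact ⟨.q, t, rfl⟩
  | r t => exact ⟨.r, t, rfl⟩
  | s t => exact ⟨.s, t, rfl⟩

theorem not_isResolving_pair_of_hasTwins {n : ℕ} (hn : 6 ≤ n) {x y : Layer} {a b : ZMod n}
    (h : HasTwins n (b - a).val x y) : ¬ IsResolving (Delta n) {x.vertex a, y.vertex b} := by
  have : NeZero n := ⟨by omega⟩
  obtain ⟨l, l', c, c', hc, hne, hx, hy⟩ := h
  have hk := ZMod.val_lt (b - a)
  have hb : ∀ i : ℤ, a + i - b = ((i - ((b - a).val : ℤ) : ℤ) : ZMod n) := fun i => by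
    push_cast
    rw [ZMod.natCast_zmod_val]
    ring
  have ha : ∀ i : ℤ, a + i - a = (i : ZMod n) := fun i => by ring
  have hrep := fun (i : ℤ) => ZMod.val_intCast_eq_cyclicRep (show 0 < n by omega) (i := i)
  intro hW
  obtain ⟨w, hw, hd⟩ := hW (l.vertex (a + c)) (l'.vertex (a + c')) fun heq => by
    obtain ⟨hl, hcc⟩ := Layer.vertex_injective heq
    apply hne hl
    rw [← hrep c (by omega) (by omega), ← hrep c' (by omega) (by omega), add_left_cancel hcc]
  apply hd
  rcases hw with rfl | rfl
  · rw [delta_dist hn, delta_dist hn, ha, ha, hrep _ (by omega) (by omega),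
      hrep _ (by omega) (by omega), hx]
  · rw [delta_dist hn, delta_dist hn, hb, hb, hrep _ (by omega) (by omega),
      hrep _ (by omega) (by omega), hy]

theorem not_isResolving_pair {n : ℕ} (hn : 6 ≤ n) (u v : HCLVertex n) :
    ¬ IsResolving (Delta n) {u, v} := by
  have : NeZero n := ⟨by omega⟩
  obtain ⟨x, a, rfl⟩ := u.exists_vertex_eq
  obtain ⟨y, b, rfl⟩ := v.exists_vertex_eq
  have hab := ZMod.val_lt (b - a)
  have hba := ZMod.val_lt (a - b)
  have htwins : HasTwins n (b - a).val x y ∨ HasTwins n (a - b).val y x := by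
    cases x <;> cases y
    · exact .inl (hasTwins_p_p hn hab)
    · exact .inl (hasTwins_p_q hn hab)
    · exact .inl (hasTwins_p_r hn hab)
    · exact .inl (hasTwins_p_s hn hab)
    · exact .inr (hasTwins_p_q hn hba)
    · exact .inl (hasTwins_q_q hn hab)
    · exact .inl (hasTwins_q_r hn hab)
    · exact .inl (hasTwins_q_s hn hab)
    · exact .inr (hasTwins_p_r hn hba)
    · exact .inr (hasTwins_q_r hn hba)
    · exact .inl (hasTwins_r_r hn hab)
    · exact .inl (hasTwins_r_s hn hab)
    · exact .inr (hasTwins_p_s hn hba)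
    · exact .inr (hasTwins_q_s hn hba)
    · exact .inr (hasTwins_r_s hn hba)
    · exact .inl (hasTwins_s_s hn hab)
  rcases htwins with h | h
  · exact not_isResolving_pair_of_hasTwins hn h
  · rw [Set.pair_comm]
    exact not_isResolving_pair_of_hasTwins hn h

theorem ZMod.val_sub_natCast {n : ℕ} {m : ℕ} (hm : m < n) (t : ZMod n) :
    (m ≤ t.val ∧ (t - m).val = t.val - m) ∨ (t.val < m ∧ (t - m).val = t.val + n - m) := by
  have : NeZero n := ⟨by omega⟩
  have ht := ZMod.val_lt t
  have hsub : t - m = ((t.val - m : ℤ) : ZMod n) := by simp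
  rw [hsub, ZMod.val_intCast_eq_cyclicRep (by omega) (by omega) (by omega)]
  unfold cyclicRep
  split_ifs <;> omega

set_option maxHeartbeats 8000000 in
/-- The distances to three suitably spread vertices of the cycle `p` determine the layer and the
index of a vertex. -/
theorem layerDist_p_injective {n i i' j j' k k' : ℕ} (hn : 6 ≤ n) (hi : i < n) (hi' : i' < n)
    (hj : 2 ≤ i ∧ j = i - 2 ∨ i < 2 ∧ j = i + n - 2)
    (hj' : 2 ≤ i' ∧ j' = i' - 2 ∨ i' < 2 ∧ j' = i' + n - 2)
    (hk : n / 2 + 1 ≤ i ∧ k = i - (n / 2 + 1) ∨ i < n / 2 + 1 ∧ k = i + n - (n / 2 + 1))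
    (hk' : n / 2 + 1 ≤ i' ∧ k' = i' - (n / 2 + 1) ∨ i' < n / 2 + 1 ∧ k' = i' + n - (n / 2 + 1))
    (l l' : Layer) (h : layerDist n i .p l = layerDist n i' .p l')
    (h2 : layerDist n j .p l = layerDist n j' .p l')
    (h3 : layerDist n k .p l = layerDist n k' .p l') : l = l' ∧ i = i' := by
  obtain ⟨m, hm⟩ : ∃ m, n / 2 = m := ⟨_, rfl⟩
  rw [hm] at hk hk'
  have hnm : n = 2 * m ∨ n = 2 * m + 1 := by omega
  clear hm
  rcases hj with ⟨_, rfl⟩ | ⟨_, rfl⟩ <;> rcases hj' with ⟨_, rfl⟩ | ⟨_, rfl⟩ <;>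
  rcases hk with ⟨_, rfl⟩ | ⟨_, rfl⟩ <;> rcases hk' with ⟨_, rfl⟩ | ⟨_, rfl⟩ <;>
  rcases hnm with rfl | rfl <;> try omega
  all_goals
    cases l <;> cases l' <;>
      simp only [layerDist, reduceCtorEq, true_and, false_and] at h h2 h3 ⊢ <;> omega

theorem not_delta_adj_p {n : ℕ} {a b : ZMod n} (h : b ≠ a + 1) (h' : a ≠ b + 1) :
    ¬ (Delta n).Adj (.p a) (.p b) := by
  simp [delta_adj_iff, gammaRel, deltaRel, h, h']

theorem isResolving_triple {n : ℕ} (hn : 6 ≤ n) :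
    IsResolving (Delta n) {.p 0, .p 2, .p ((n / 2 + 1 : ℕ) : ZMod n)} := by
  have : NeZero n := ⟨by omega⟩
  intro u v huv
  by_contra! hW
  apply huv
  obtain ⟨l, t, rfl⟩ := u.exists_vertex_eq
  obtain ⟨l', t', rfl⟩ := v.exists_vertex_eq
  have h : ∀ m : ℕ, (.p (m : ZMod n) : HCLVertex n) ∈
      ({.p 0, .p 2, .p ((n / 2 + 1 : ℕ) : ZMod n)} : Set (HCLVertex n)) →
      layerDist n (t - m).val .p l = layerDist n (t' - m).val .p l' := fun m hm => by
    have := hW _ hm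
    rwa [show (.p (m : ZMod n) : HCLVertex n) = Layer.p.vertex (m : ZMod n) from rfl,
      delta_dist hn, delta_dist hn] at this
  have h0 := h 0 (by simp)
  have h2 := h 2 (by simp)
  have h3 := h (n / 2 + 1) (by simp)
  rw [Nat.cast_zero, sub_zero, sub_zero] at h0
  obtain ⟨rfl, hval⟩ := layerDist_p_injective hn (ZMod.val_lt t) (ZMod.val_lt t')
    (ZMod.val_sub_natCast (m := 2) (by omega) t) (ZMod.val_sub_natCast (m := 2) (by omega) t')
    (ZMod.val_sub_natCast (by omega) t) (ZMod.val_sub_natCast (by omega) t') l l' h0 h2 h3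
  rw [ZMod.val_injective n hval]

theorem delta_independent_metric_number_eq_three (n : ℕ) (hn : 6 ≤ n) :
    (∃ W : Finset (HCLVertex n), W.card = 3 ∧ IsResolving (Delta n) ↑W ∧
      ∀ u ∈ W, ∀ v ∈ W, ¬ (Delta n).Adj u v) ∧
    (∀ W : Finset (HCLVertex n), W.card = 2 → ¬ IsResolving (Delta n) ↑W) := by
  have : NeZero n := ⟨by omega⟩
  have hcast : ∀ {i j : ℕ}, i < n → j < n → i ≠ j → (i : ZMod n) ≠ (j : ZMod n) :=
    fun hi hj hij h => hij (by
      have := congrArg ZMod.val h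
      rwa [ZMod.val_natCast, ZMod.val_natCast, Nat.mod_eq_of_lt hi, Nat.mod_eq_of_lt hj] at this)
  have hcast' : ∀ {i j : ℕ}, i < n → j < n → i ≠ j →
      (HCLVertex.p (i : ZMod n)) ≠ (HCLVertex.p (j : ZMod n)) :=
    fun hi hj hij h => hcast hi hj hij (HCLVertex.p.inj h)
  have hnadj : ∀ {i j : ℕ}, i + 1 < n → j + 1 < n → j ≠ i + 1 → i ≠ j + 1 →
      ¬ (Delta n).Adj (.p (i : ZMod n)) (.p (j : ZMod n)) := fun {i j} hi hj hij hji =>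
    not_delta_adj_p (by exact_mod_cast hcast (by omega) hi hij)
      (by exact_mod_cast hcast (by omega) hj hji)
  refine ⟨⟨{.p ((0 : ℕ) : ZMod n), .p ((2 : ℕ) : ZMod n), .p ((n / 2 + 1 : ℕ) : ZMod n)},
    ?_, ?_, ?_⟩, ?_⟩
  · exact Finset.card_eq_three.2 ⟨_, _, _, hcast' (by omega) (by omega) (by omega),
      hcast' (by omega) (by omega) (by omega), hcast' (by omega) (by omega) (by omega), rfl⟩
  · simpa using isResolving_triple hn
  · intro u hu v hv
    simp only [Finset.mem_insert, Finset.mem_singleton] at hu hv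
    rcases hu with rfl | rfl | rfl <;> rcases hv with rfl | rfl | rfl <;>
      exact hnadj (by omega) (by omega) (by omega) (by omega)
  · intro W hW
    obtain ⟨u, v, -, rfl⟩ := Finset.card_eq_two.1 hW
    simpa using not_isResolving_pair hn u v
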